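/- arXiv:1707.00513 — 2 statements merged into one kernel-verified Lean document; each statement's English description precedes it below -/
import Mathlib

section
/- (Proposition III.1(ii)) Assume: Γ ℓ k ≥ 0 for all ℓ, k; for every ℓ and every k, Γ ℓ k ≤ Γ ℓ ℓ (i.e., argmax_k Γ(w_ℓ | w_k) = ℓ); the quantizer fixes the level values, i.e. Q (w ℓ) = ℓ for every ℓ : Fin M; the matrix Pᵀ * P is invertible; and the dequantized observation vector y : Fin T → ℝ defined by y t := w (ω̃ t) satisfies y - σ²·𝟙 ∈ range of P.mulVec (there exists h : Fin K → ℝ with P.mulVec h = y - σ²·𝟙, where 𝟙 is the all-ones vector). Then the least-squares power-domain estimate g_LSPD := (Pᵀ * P)⁻¹.mulVec (Pᵀ.mulVec (y - σ²·𝟙)) maximizes the likelihood: for every g : Fin K → ℝ, ∏_{t} Γ (ω̃ t) (Q ((P.mulVec g) t + σ²)) ≤ ∏_{t} Γ (ω̃ t) (Q ((P.mulVec g_LSPD) t + σ²)). -/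
open Matrix
/-- Proposition III.1(ii): under the diagonal-maximum condition on the DMC, the
least-squares power-domain (LSPD) estimate maximizes the likelihood. -/
theorem lspd_maximizes_likelihood
    (M T K : ℕ) (hM : 0 < M) (hT : 0 < T) (hK : 0 < K)
    (w : Fin M → ℝ) (Γ : Fin M → Fin M → ℝ) (Q : ℝ → Fin M)
    (P : Matrix (Fin T) (Fin K) ℝ) (σ2 : ℝ) (ω' : Fin T → Fin M)
    (hΓnonneg : ∀ ℓ k : Fin M, 0 ≤ Γ ℓ k)
    (hΓdiag : ∀ ℓ k : Fin M, Γ ℓ k ≤ Γ ℓ ℓ)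
    (hQw : ∀ ℓ : Fin M, Q (w ℓ) = ℓ)
    (hinv : IsUnit (Pᵀ * P).det)
    (y : Fin T → ℝ) (hy : ∀ t : Fin T, y t = w (ω' t))
    (hrange : ∃ h : Fin K → ℝ, P.mulVec h = y - fun _ => σ2) :
    ∀ g : Fin K → ℝ,
      ∏ t : Fin T, Γ (ω' t) (Q (P.mulVec g t + σ2))
        ≤ ∏ t : Fin T,
            Γ (ω' t)
              (Q (P.mulVec ((Pᵀ * P)⁻¹.mulVec (Pᵀ.mulVec (y - fun _ => σ2))) t + σ2)) := by
  intro g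
  obtain ⟨h, hh⟩ := hrange
  have hls : (Pᵀ * P)⁻¹.mulVec (Pᵀ.mulVec (y - fun _ => σ2)) = h := by
    rw [← hh, mulVec_mulVec, mulVec_mulVec, Matrix.mul_assoc, nonsing_inv_mul _ hinv, one_mulVec]
  rw [hls, hh]
  refine Finset.prod_le_prod (fun t _ => hΓnonneg _ _) fun t _ => ?_
  rw [Pi.sub_apply, sub_add_cancel, hy, hQw]
  exact hΓdiag _ _
end

section
/- (Characterization of the ML set, equation (16) in the proof of Proposition III.1) Assume: Γ ℓ k ≥ 0 for all ℓ, k; for every ℓ and every k ≠ ℓ, Γ ℓ k < Γ ℓ ℓ (the diagonal is the unique row maximum); Γ (ω̃ t) (ω̃ t) > 0 for every t : Fin T; and there exists g* : Fin K → ℝ with Q ((P.mulVec g*) t + σ²) = ω̃ t for all t. Then a vector g : Fin K → ℝ maximizes the likelihood L(g) = ∏_{t} Γ (ω̃ t) (Q ((P.mulVec g) t + σ²)) over ℝ^K if and only if Q ((P.mulVec g) t + σ²) = ω̃ t for every t : Fin T. -/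
/-- A strict product inequality that allows the smaller factors to vanish. -/
theorem prod_lt_prod_of_nonneg_of_pos {ι : Type*} {s : Finset ι} {a b : ι → ℝ}
    (ha : ∀ i ∈ s, 0 ≤ a i) (hab : ∀ i ∈ s, a i ≤ b i) (hb : ∀ i ∈ s, 0 < b i)
    (hlt : ∃ i ∈ s, a i < b i) : ∏ i ∈ s, a i < ∏ i ∈ s, b i := by
  classical
  obtain ⟨i, hi, hlt⟩ := hlt
  rw [← Finset.mul_prod_erase s a hi, ← Finset.mul_prod_erase s b hi]
  have hle : ∏ j ∈ s.erase i, a j ≤ ∏ j ∈ s.erase i, b j :=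
    Finset.prod_le_prod (fun j hj => ha j (Finset.mem_of_mem_erase hj))
      fun j hj => hab j (Finset.mem_of_mem_erase hj)
  have hpos : 0 < ∏ j ∈ s.erase i, b j :=
    Finset.prod_pos fun j hj => hb j (Finset.mem_of_mem_erase hj)
  exact (mul_le_mul_of_nonneg_left hle (ha i hi)).trans_lt (mul_lt_mul_of_pos_right hlt hpos)

/-- Characterization of the ML set (equation (16) in the proof of Proposition III.1):
under strict diagonal dominance of the DMC rows, a channel vector maximizes the
likelihood iff its noiseless received powers quantize to the observed feedback. -/
theorem ml_set_characterization
    (M T K : ℕ) (hM : 0 < M) (hT : 0 < T) (hK : 0 < K)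
    (Γ : Fin M → Fin M → ℝ) (Q : ℝ → Fin M)
    (P : Matrix (Fin T) (Fin K) ℝ) (σ2 : ℝ) (ω' : Fin T → Fin M)
    (hΓnonneg : ∀ ℓ k : Fin M, 0 ≤ Γ ℓ k)
    (hΓdiag : ∀ ℓ k : Fin M, k ≠ ℓ → Γ ℓ k < Γ ℓ ℓ)
    (hΓpos : ∀ t : Fin T, 0 < Γ (ω' t) (ω' t))
    (hexists : ∃ gstar : Fin K → ℝ, ∀ t : Fin T, Q (P.mulVec gstar t + σ2) = ω' t) :
    ∀ g : Fin K → ℝ,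
      (∀ g' : Fin K → ℝ,
          ∏ t : Fin T, Γ (ω' t) (Q (P.mulVec g' t + σ2))
            ≤ ∏ t : Fin T, Γ (ω' t) (Q (P.mulVec g t + σ2)))
        ↔ ∀ t : Fin T, Q (P.mulVec g t + σ2) = ω' t := by
  have hle : ∀ ℓ k : Fin M, Γ ℓ k ≤ Γ ℓ ℓ := fun ℓ k => by
    rcases eq_or_ne k ℓ with rfl | h
    · exact le_rfl
    · exact (hΓdiag ℓ k h).le
  intro g
  constructor
  · intro hmax
    by_contra! hne
    obtain ⟨t, ht⟩ := hne
    obtain ⟨gstar, hstar⟩ := hexists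
    have hge := hmax gstar
    simp only [hstar] at hge
    exact hge.not_gt <| prod_lt_prod_of_nonneg_of_pos (fun _ _ => hΓnonneg _ _)
      (fun _ _ => hle _ _) (fun t _ => hΓpos t) ⟨t, Finset.mem_univ t, hΓdiag _ _ ht⟩
  · intro hg g'
    simp only [hg]
    exact Finset.prod_le_prod (fun _ _ => hΓnonneg _ _) fun _ _ => hle _ _
end
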